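/- The commutator subgroup of H_{2,2} equals {I, -I}. -/

import Mathlib

noncomputable section

open Complex Matrix

def S1 : Matrix (Fin 4) (Fin 4) ℂ := !![0,0,1,0; 0,0,0,1; 1,0,0,0; 0,1,0,0]
def S2 : Matrix (Fin 4) (Fin 4) ℂ := !![0,1,0,0; 1,0,0,0; 0,0,0,1; 0,0,1,0]
def T1 : Matrix (Fin 4) (Fin 4) ℂ := !![1,0,0,0; 0,1,0,0; 0,0,-1,0; 0,0,0,-1]
def T2 : Matrix (Fin 4) (Fin 4) ℂ := !![1,0,0,0; 0,-1,0,0; 0,0,1,0; 0,0,0,-1]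

/-- The Heisenberg group `H_{2,2}`: the subgroup of invertible 4×4 complex matrices
generated by `S1`, `S2`, `T1`, `T2` (all of which have determinant 1). -/
def H22 : Subgroup (Matrix (Fin 4) (Fin 4) ℂ)ˣ :=
  Subgroup.closure {u : (Matrix (Fin 4) (Fin 4) ℂ)ˣ |
    (u : Matrix (Fin 4) (Fin 4) ℂ) = S1 ∨ (u : Matrix (Fin 4) (Fin 4) ℂ) = S2 ∨
    (u : Matrix (Fin 4) (Fin 4) ℂ) = T1 ∨ (u : Matrix (Fin 4) (Fin 4) ℂ) = T2}

open scoped commutatorElement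

theorem commutator_closure_le_iff {G : Type*} [Group G] {s t : Set G} {N : Subgroup G}
    [N.Normal] :
    ⁅Subgroup.closure s, Subgroup.closure t⁆ ≤ N ↔ ∀ a ∈ s, ∀ b ∈ t, ⁅a, b⁆ ∈ N := by
  -- Modulo `N` the claim is that two subgroups centralize each other once their generators do.
  have commute_mk_iff (a b : G) :
      Commute (QuotientGroup.mk' N a) (QuotientGroup.mk' N b) ↔ ⁅a, b⁆ ∈ N := by
    rw [← commutatorElement_eq_one_iff_commute, ← map_commutatorElement, QuotientGroup.mk'_apply,
      QuotientGroup.eq_one_iff]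
  calc ⁅Subgroup.closure s, Subgroup.closure t⁆ ≤ N
    _ ↔ ⁅Subgroup.closure (QuotientGroup.mk' N '' s),
          Subgroup.closure (QuotientGroup.mk' N '' t)⁆ = ⊥ := by
      rw [← MonoidHom.map_closure, ← MonoidHom.map_closure, ← Subgroup.map_commutator,
        Subgroup.map_eq_bot_iff, QuotientGroup.ker_mk']
    _ ↔ QuotientGroup.mk' N '' s ⊆ Subgroup.centralizer (QuotientGroup.mk' N '' t) := by
      rw [Subgroup.commutator_eq_bot_iff_le_centralizer, Subgroup.centralizer_closure,
        Subgroup.closure_le]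
    _ ↔ ∀ a ∈ s, ∀ b ∈ t, ⁅a, b⁆ ∈ N := by
      simp only [Set.subset_def, Set.forall_mem_image, SetLike.mem_coe,
        Subgroup.mem_centralizer_iff, ← commute_mk_iff, Commute, SemiconjBy, eq_comm]

section HasDistribNeg

variable {G : Type*} [Group G] [HasDistribNeg G]

theorem commutatorElement_eq_neg_one_iff {a b : G} : ⁅a, b⁆ = -1 ↔ a * b = -(b * a) := by
  rw [commutatorElement_def, mul_inv_eq_iff_eq_mul, mul_inv_eq_iff_eq_mul, neg_one_mul, neg_mul]

theorem mem_zpowers_neg_one_iff {a : G} : a ∈ Subgroup.zpowers (-1) ↔ a = 1 ∨ a = -1 := by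
  constructor
  · rintro ⟨n, rfl⟩
    exact n.even_or_odd.imp Even.neg_one_zpow Odd.neg_one_zpow
  · rintro (rfl | rfl)
    · exact one_mem _
    · exact Subgroup.mem_zpowers _

instance normal_zpowers_neg_one : (Subgroup.zpowers (-1 : G)).Normal where
  conj_mem a ha g := by
    rw [mem_zpowers_neg_one_iff] at ha ⊢
    rcases ha with rfl | rfl <;> simp

theorem commutator_closure_eq_zpowers_neg_one {s : Set G}
    (hs : ∀ a ∈ s, ∀ b ∈ s, Commute a b ∨ a * b = -(b * a))
    (hneg : ∃ a ∈ s, ∃ b ∈ s, a * b = -(b * a)) :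
    ⁅Subgroup.closure s, Subgroup.closure s⁆ = Subgroup.zpowers (-1) := by
  apply le_antisymm
  · refine commutator_closure_le_iff.mpr fun a ha b hb ↦ mem_zpowers_neg_one_iff.mpr ?_
    exact (hs a ha b hb).imp Commute.commutator_eq commutatorElement_eq_neg_one_iff.mpr
  · obtain ⟨a, ha, b, hb, hab⟩ := hneg
    rw [Subgroup.zpowers_le, ← commutatorElement_eq_neg_one_iff.mpr hab]
    exact Subgroup.commutator_mem_commutator (Subgroup.subset_closure ha)
      (Subgroup.subset_closure hb)

end HasDistribNeg

theorem commute_S1_S2 : Commute S1 S2 := by simp [Commute, SemiconjBy, S1, S2]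

theorem commute_S1_T2 : Commute S1 T2 := by simp [Commute, SemiconjBy, S1, T2]

theorem commute_S2_T1 : Commute S2 T1 := by simp [Commute, SemiconjBy, S2, T1]

theorem commute_T1_T2 : Commute T1 T2 := by simp [Commute, SemiconjBy, T1, T2]

theorem S1_mul_T1 : S1 * T1 = -(T1 * S1) := by simp [S1, T1]

theorem S2_mul_T2 : S2 * T2 = -(T2 * S2) := by simp [S2, T2]

theorem matrix_one_fin_four {R : Type*} [Zero R] [One R] :
    (1 : Matrix (Fin 4) (Fin 4) R) = !![1, 0, 0, 0; 0, 1, 0, 0; 0, 0, 1, 0; 0, 0, 0, 1] := by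
  ext i j
  fin_cases i <;> fin_cases j <;> rfl

theorem isUnit_S1 : IsUnit S1 := by
  have S1_mul_S1 : S1 * S1 = 1 := by simp [S1, matrix_one_fin_four]
  exact .of_mul_eq_one S1 S1_mul_S1

theorem isUnit_T1 : IsUnit T1 := by
  have T1_mul_T1 : T1 * T1 = 1 := by simp [T1, matrix_one_fin_four]
  exact .of_mul_eq_one T1 T1_mul_T1

theorem commute_or_mul_eq_neg_of_generators {A B : Matrix (Fin 4) (Fin 4) ℂ}
    (hA : A = S1 ∨ A = S2 ∨ A = T1 ∨ A = T2) (hB : B = S1 ∨ B = S2 ∨ B = T1 ∨ B = T2) :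
    Commute A B ∨ A * B = -(B * A) := by
  rcases hA with rfl | rfl | rfl | rfl <;> rcases hB with rfl | rfl | rfl | rfl <;>
    simp [commute_S1_S2, commute_S1_S2.symm, commute_S1_T2, commute_S1_T2.symm, commute_S2_T1,
      commute_S2_T1.symm, commute_T1_T2, commute_T1_T2.symm, S1_mul_T1, S2_mul_T2]

theorem commutator_H22 : ⁅H22, H22⁆ = Subgroup.zpowers (-1) := by
  apply commutator_closure_eq_zpowers_neg_one
  · intro a ha b hb
    simpa only [← Commute.units_val_iff, Units.ext_iff, Units.val_mul, Units.val_neg] using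
      commute_or_mul_eq_neg_of_generators ha hb
  · obtain ⟨s, hs⟩ := isUnit_S1
    obtain ⟨t, ht⟩ := isUnit_T1
    refine ⟨s, .inl hs, t, .inr (.inr (.inl ht)), Units.ext ?_⟩
    simpa only [Units.val_mul, Units.val_neg, hs, ht] using S1_mul_T1

/-- The commutator subgroup of the Heisenberg group `H_{2,2}`
equals `{I, -I}`. -/
theorem heisenberg_commutator :
    ∀ u : (Matrix (Fin 4) (Fin 4) ℂ)ˣ,
      u ∈ ⁅H22, H22⁆ ↔
        (u : Matrix (Fin 4) (Fin 4) ℂ) = 1 ∨ (u : Matrix (Fin 4) (Fin 4) ℂ) = -1 := by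
  intro u
  rw [commutator_H22, mem_zpowers_neg_one_iff, Units.val_eq_one, Units.val_eq_neg_one]
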